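/- Let α = (α₁,α₂,α₃) and β = (β₁,β₂,β₃) be triples in (0,π)³, neither of which is Euclidean or flipped Euclidean; that is, α₁+α₂+α₃ ≠ π and αⱼ + αₖ ≠ αᵢ + π for every i (and similarly for β). If cᵢ(α) = cᵢ(β) for i = 1,2,3, then αᵢ = βᵢ for i = 1,2,3. (The generalized edge lengths determine the angles of a non-Euclidean Möbius triangle.) -/

import Mathlib

/-!
Möbius triangles obey one law of cosines in all geometries. Writing `x`, `y`, `z` for the
generalized hyperbolic cosines of the edges and `a` for the angle opposite the first of them,
`cos a * (ε * √((y ^ 2 - 1) * (z ^ 2 - 1))) = y * z - x`, where `ε` is the sign of `x ^ 2 - 1`.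
Each of `x ^ 2 - 1`, `y ^ 2 - 1`, `z ^ 2 - 1` is a positive multiple of `-D`, where `D` is the
determinant of the Gram matrix of the angles. As `D` factors into the cosines of `(a + b + c) / 2`,
`(b + c - a) / 2`, `(a + c - b) / 2` and `(a + b - c) / 2`, it vanishes exactly for Euclidean and
flipped Euclidean angles. For all others the law of cosines can be solved for `cos a`.
-/

open Real

/-- The "cosh of the generalized length" of the edge opposite the first angle of a
Möbius triangle with angles `a`, `b`, `c`. -/
noncomputable def coshLen (a b c : ℝ) : ℝ :=
  (Real.cos a + Real.cos b * Real.cos c) / (Real.sin b * Real.sin c)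

theorem coshLen_comm (a b c : ℝ) : coshLen a b c = coshLen a c b := by
  simp only [coshLen, mul_comm]

/-- The determinant of the Gram matrix of a Möbius triangle with angles `a`, `b`, `c`, that is, of
the matrix of inner products of the outward unit normals of its edges. It separates the geometries:
it is positive for spherical triangles, negative for hyperbolic ones and zero for Euclidean and
flipped Euclidean ones. -/
noncomputable def gramDet (a b c : ℝ) : ℝ :=
  Matrix.det !![1, -cos c, -cos b; -cos c, 1, -cos a; -cos b, -cos a, 1]

theorem gramDet_eq (a b c : ℝ) :
    gramDet a b c =
      1 - cos a ^ 2 - cos b ^ 2 - cos c ^ 2 - 2 * cos a * cos b * cos c := by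
  simp only [gramDet, Matrix.det_fin_three, Matrix.of_apply, Matrix.cons_val]
  ring

theorem gramDet_rotate (a b c : ℝ) : gramDet b c a = gramDet a b c := by
  simp only [gramDet_eq]
  ring

theorem gramDet_eq_sin_sq_mul_sin_sq_sub (a b c : ℝ) :
    gramDet a b c = sin b ^ 2 * sin c ^ 2 - (cos a + cos b * cos c) ^ 2 := by
  rw [gramDet_eq, sin_sq, sin_sq]
  ring

theorem gramDet_eq_prod_cos (a b c : ℝ) :
    gramDet a b c = -(4 * (cos ((a + b + c) / 2) * cos ((b + c - a) / 2) *
      cos ((a + c - b) / 2) * cos ((a + b - c) / 2))) := by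
  have hadd : cos a + cos (b + c) = 2 * cos ((a + b + c) / 2) * cos ((b + c - a) / 2) := by
    rw [add_comm, cos_add_cos]
    ring_nf
  have hsub : cos a + cos (b - c) = 2 * cos ((a + b - c) / 2) * cos ((a + c - b) / 2) := by
    rw [cos_add_cos]
    ring_nf
  calc gramDet a b c = -((cos a + cos (b + c)) * (cos a + cos (b - c))) := by
        rw [gramDet_eq_sin_sq_mul_sin_sq_sub, cos_add, cos_sub]
        ring
    _ = _ := by
        rw [hadd, hsub]
        ring

theorem cos_half_eq_zero_iff {x : ℝ} (hx : x ∈ Set.Ioo (-π) (3 * π)) :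
    cos (x / 2) = 0 ↔ x = π := by
  rw [← sin_pi_div_two_sub,
    sin_eq_zero_iff_of_lt_of_lt (by linarith [hx.2]) (by linarith [hx.1])]
  constructor <;> intro h <;> linarith

theorem gramDet_eq_zero_iff {a b c : ℝ}
    (ha : a ∈ Set.Ioo 0 π) (hb : b ∈ Set.Ioo 0 π) (hc : c ∈ Set.Ioo 0 π) :
    gramDet a b c = 0 ↔
      a + b + c = π ∨ b + c = a + π ∨ a + c = b + π ∨ a + b = c + π := by
  obtain ⟨ha₀, haπ⟩ := ha
  obtain ⟨hb₀, hbπ⟩ := hb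
  obtain ⟨hc₀, hcπ⟩ := hc
  rw [gramDet_eq_prod_cos, neg_eq_zero, mul_eq_zero_iff_left four_ne_zero]
  simp only [mul_eq_zero, or_assoc]
  rw [cos_half_eq_zero_iff ⟨by linarith, by linarith⟩,
    cos_half_eq_zero_iff ⟨by linarith, by linarith⟩,
    cos_half_eq_zero_iff ⟨by linarith, by linarith⟩,
    cos_half_eq_zero_iff ⟨by linarith, by linarith⟩]
  simp only [sub_eq_iff_eq_add']

section LawOfCosines

variable {a b c : ℝ}

theorem coshLen_sq_sub_one (hb : sin b ≠ 0) (hc : sin c ≠ 0) :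
    coshLen a b c ^ 2 - 1 = -gramDet a b c / (sin b * sin c) ^ 2 := by
  rw [coshLen, gramDet_eq_sin_sq_mul_sin_sq_sub]
  field_simp
  ring

theorem coshLen_mul_coshLen_sub_coshLen (ha : sin a ≠ 0) (hb : sin b ≠ 0) (hc : sin c ≠ 0) :
    coshLen b c a * coshLen c a b - coshLen a b c =
      cos a * (-gramDet a b c / (sin a ^ 2 * sin b * sin c)) := by
  simp only [coshLen, gramDet_eq]
  field_simp
  rw [sin_sq]
  ring

theorem sign_coshLen_sq_sub_one (hb : sin b ≠ 0) (hc : sin c ≠ 0) :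
    SignType.sign (coshLen a b c ^ 2 - 1) = SignType.sign (-gramDet a b c) := by
  have hpos : 0 < ((sin b * sin c) ^ 2)⁻¹ := by positivity
  rw [coshLen_sq_sub_one hb hc, div_eq_mul_inv, sign_mul, sign_pos hpos, mul_one]

theorem sqrt_coshLen_sq_sub_one_mul (ha : sin a ≠ 0) (hb : 0 < sin b) (hc : 0 < sin c) :
    √((coshLen b c a ^ 2 - 1) * (coshLen c a b ^ 2 - 1)) =
      |-gramDet a b c| / (sin a ^ 2 * sin b * sin c) := by
  have hsq : (coshLen b c a ^ 2 - 1) * (coshLen c a b ^ 2 - 1) =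
      (-gramDet a b c / (sin a ^ 2 * sin b * sin c)) ^ 2 := by
    rw [coshLen_sq_sub_one hc.ne' ha, coshLen_sq_sub_one ha hb.ne', gramDet_rotate,
      ← gramDet_rotate c a b]
    ring
  have hpos : 0 < sin a ^ 2 * sin b * sin c := by positivity
  rw [hsq, sqrt_sq_eq_abs, abs_div, abs_of_pos hpos]

/-- The cosine of the angle opposite the edge with generalized hyperbolic cosine `x` in a Möbius
triangle whose other two edges have generalized hyperbolic cosines `y` and `z`. The sign accounts
for `cos a = (cosh l₂ * cosh l₃ - cosh l₁) / (sinh l₂ * sinh l₃)` in the hyperbolic case, where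
`1 < x ^ 2`, against `cos a = (cos l₁ - cos l₂ * cos l₃) / (sin l₂ * sin l₃)` in the spherical case,
where `x ^ 2 < 1`. In the Euclidean case the denominator is zero and the value is meaningless. -/
noncomputable def cosOfCoshLen (x y z : ℝ) : ℝ :=
  (y * z - x) / (SignType.sign (x ^ 2 - 1) * √((y ^ 2 - 1) * (z ^ 2 - 1)))

theorem cos_eq_cosOfCoshLen (ha : sin a ≠ 0) (hb : 0 < sin b) (hc : 0 < sin c)
    (hD : gramDet a b c ≠ 0) :
    cos a = cosOfCoshLen (coshLen a b c) (coshLen b c a) (coshLen c a b) := by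
  rw [cosOfCoshLen, sign_coshLen_sq_sub_one hb.ne' hc.ne', sqrt_coshLen_sq_sub_one_mul ha hb hc,
    ← mul_div_assoc, sign_mul_abs, coshLen_mul_coshLen_sub_coshLen ha hb.ne' hc.ne',
    mul_div_cancel_right₀]
  exact div_ne_zero (neg_ne_zero.mpr hD) (by positivity)

end LawOfCosines

theorem angle_eq_of_coshLen_eq {a b c a' b' c' : ℝ}
    (ha : a ∈ Set.Ioo 0 π) (hb : b ∈ Set.Ioo 0 π) (hc : c ∈ Set.Ioo 0 π)
    (ha' : a' ∈ Set.Ioo 0 π) (hb' : b' ∈ Set.Ioo 0 π) (hc' : c' ∈ Set.Ioo 0 π)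
    (hD : gramDet a b c ≠ 0) (hD' : gramDet a' b' c' ≠ 0)
    (hx : coshLen a b c = coshLen a' b' c') (hy : coshLen b c a = coshLen b' c' a')
    (hz : coshLen c a b = coshLen c' a' b') :
    a = a' := by
  refine injOn_cos (Set.Ioo_subset_Icc_self ha) (Set.Ioo_subset_Icc_self ha') ?_
  rw [cos_eq_cosOfCoshLen (sin_pos_of_mem_Ioo ha).ne' (sin_pos_of_mem_Ioo hb)
      (sin_pos_of_mem_Ioo hc) hD,
    cos_eq_cosOfCoshLen (sin_pos_of_mem_Ioo ha').ne' (sin_pos_of_mem_Ioo hb')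
      (sin_pos_of_mem_Ioo hc') hD', hx, hy, hz]

/-- If α = (α₁,α₂,α₃) and β = (β₁,β₂,β₃) are triples in (0,π)³, neither
Euclidean (sum = π) nor flipped Euclidean (αⱼ+αₖ = αᵢ+π for some i), and the
corresponding generalized edge lengths agree (i.e. cᵢ(α) = cᵢ(β) for i = 1,2,3), then
αᵢ = βᵢ for i = 1,2,3. -/
theorem lengths_determine_angles (α₁ α₂ α₃ β₁ β₂ β₃ : ℝ)
    (hα₁ : α₁ ∈ Set.Ioo 0 π) (hα₂ : α₂ ∈ Set.Ioo 0 π) (hα₃ : α₃ ∈ Set.Ioo 0 π)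
    (hβ₁ : β₁ ∈ Set.Ioo 0 π) (hβ₂ : β₂ ∈ Set.Ioo 0 π) (hβ₃ : β₃ ∈ Set.Ioo 0 π)
    (hαE : α₁ + α₂ + α₃ ≠ π)
    (hαF₁ : α₂ + α₃ ≠ α₁ + π) (hαF₂ : α₁ + α₃ ≠ α₂ + π) (hαF₃ : α₁ + α₂ ≠ α₃ + π)
    (hβE : β₁ + β₂ + β₃ ≠ π)
    (hβF₁ : β₂ + β₃ ≠ β₁ + π) (hβF₂ : β₁ + β₃ ≠ β₂ + π) (hβF₃ : β₁ + β₂ ≠ β₃ + π)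
    (hc₁ : coshLen α₁ α₂ α₃ = coshLen β₁ β₂ β₃)
    (hc₂ : coshLen α₂ α₁ α₃ = coshLen β₂ β₁ β₃)
    (hc₃ : coshLen α₃ α₁ α₂ = coshLen β₃ β₁ β₂) :
    α₁ = β₁ ∧ α₂ = β₂ ∧ α₃ = β₃ := by
  have hDα : gramDet α₁ α₂ α₃ ≠ 0 := by
    simp [gramDet_eq_zero_iff hα₁ hα₂ hα₃, hαE, hαF₁, hαF₂, hαF₃]
  have hDβ : gramDet β₁ β₂ β₃ ≠ 0 := by
    simp [gramDet_eq_zero_iff hβ₁ hβ₂ hβ₃, hβE, hβF₁, hβF₂, hβF₃]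
  rw [coshLen_comm α₂, coshLen_comm β₂] at hc₂
  refine ⟨angle_eq_of_coshLen_eq hα₁ hα₂ hα₃ hβ₁ hβ₂ hβ₃ hDα hDβ hc₁ hc₂ hc₃,
    angle_eq_of_coshLen_eq hα₂ hα₃ hα₁ hβ₂ hβ₃ hβ₁ ?_ ?_ hc₂ hc₃ hc₁,
    angle_eq_of_coshLen_eq hα₃ hα₁ hα₂ hβ₃ hβ₁ hβ₂ ?_ ?_ hc₃ hc₁ hc₂⟩
  · rwa [gramDet_rotate]
  · rwa [gramDet_rotate]
  · rwa [← gramDet_rotate]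
  · rwa [← gramDet_rotate]
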